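/- arXiv:math/0609029 — 2 statements merged into one kernel-verified Lean document; each statement's English description precedes it below -/
import Mathlib

section
/- Fix an integer d ≥ 1. For every g ∈ G there exist a unique x ∈ 𝒳_d and a unique y ∈ 𝒴_d(x) such that g = xy; moreover x and y commute. (This is the d-decomposition of g into its d-part x and d-regular part y.) -/
open Polynomial

/-- For `g ∈ GL(V)` with `n = dim V`, the subspace `V_g = range((g - 1)^n)`. -/
noncomputable def primaryRange {F V : Type} [Field F] [AddCommGroup V] [Module F V]
    (g : (Module.End F V)ˣ) : Submodule F V :=
  LinearMap.range (((g : Module.End F V) - 1) ^ Module.finrank F V)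

/-- For `g ∈ GL(V)` with `n = dim V`, the subspace `V_g⁰ = ker((g - 1)^n)`. -/
noncomputable def primaryKer {F V : Type} [Field F] [AddCommGroup V] [Module F V]
    (g : (Module.End F V)ˣ) : Submodule F V :=
  LinearMap.ker (((g : Module.End F V) - 1) ^ Module.finrank F V)

/-- The set `𝒳_d` of `d`-elements of `GL(V)`: those `g` fixing `V_g⁰` pointwise such
that every monic irreducible factor of the characteristic polynomial of `g` other
than `X - 1` has degree divisible by `d`. -/
noncomputable def dElements (F V : Type) [Field F] [AddCommGroup V] [Module F V]
    [FiniteDimensional F V] (d : ℕ) : Set (Module.End F V)ˣ :=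
  {g | (∀ v ∈ primaryKer g, (g : Module.End F V) v = v) ∧
    ∀ f : Polynomial F, f.Monic → Irreducible f →
      f ∣ LinearMap.charpoly (g : Module.End F V) → f ≠ X - 1 → d ∣ f.natDegree}

/-- For `x ∈ 𝒳_d`, the set `𝒴_d(x)`: those `y ∈ GL(V)` fixing `V_x` pointwise,
mapping `V_x⁰` into itself, and such that every monic irreducible factor of the
characteristic polynomial of `y` other than `X - 1` has degree not divisible by `d`. -/
noncomputable def dRegular (F V : Type) [Field F] [AddCommGroup V] [Module F V]
    [FiniteDimensional F V] (d : ℕ) (x : (Module.End F V)ˣ) :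
    Set (Module.End F V)ˣ :=
  {y | (∀ v ∈ primaryRange x, (y : Module.End F V) v = v) ∧
    (∀ v ∈ primaryKer x, (y : Module.End F V) v ∈ primaryKer x) ∧
    ∀ f : Polynomial F, f.Monic → Irreducible f →
      f ∣ LinearMap.charpoly (y : Module.End F V) → f ≠ X - 1 → ¬ d ∣ f.natDegree}

/-!
Let `A` be the set of polynomials other than `X - 1` of degree divisible by `d`, and split `V` as
`V_A(g) ⊕ V_Aᶜ(g)`, grouping the primary components of `g` by whether their monic irreducible
polynomial lies in `A`. The `d`-part `x` must act as `g` on `V_A(g)` and trivially on `V_Aᶜ(g)`,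
and the `d`-regular part `y` the other way around. Indeed, for a `d`-element `x` the Fitting
components `V_x` and `V_x⁰` are `V_A(x)` and `V_Aᶜ(x)`. If `g = xy` is a `d`-decomposition, then
`g` agrees with `x` on the former and with `y` on the latter, which are thus contained in `V_A(g)`
and `V_Aᶜ(g)`; since both pairs are complementary, the inclusions are equalities.
-/

theorem eq_and_eq_of_isCompl_of_disjoint_of_le {α : Type*} [Lattice α] [BoundedOrder α]
    [IsModularLattice α] {a b c d : α} (hab : IsCompl a b) (hcd : Disjoint c d) (hac : a ≤ c)
    (hbd : b ≤ d) : a = c ∧ b = d := by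
  constructor
  · exact eq_of_le_of_inf_le_of_le_sup hac ((hcd.mono_right hbd).eq_bot.trans_le bot_le)
      (le_top.trans hab.sup_eq_top.ge)
  · exact eq_of_le_of_inf_le_of_le_sup hbd ((hcd.symm.mono_right hac).eq_bot.trans_le bot_le)
      (le_top.trans hab.symm.sup_eq_top.ge)

section FactorsIn

variable {F : Type*} [Field F] {A B : Set F[X]} {p q : F[X]}

/-- The multiplicative submonoid of nonzero polynomials all of whose monic irreducible factors
belong to `A`. -/
def factorsIn (A : Set F[X]) : Submonoid F[X] where
  carrier := {p | p ≠ 0 ∧ ∀ f : F[X], f.Monic → Irreducible f → f ∣ p → f ∈ A}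
  one_mem' := ⟨one_ne_zero, fun _ _ hf hdvd => absurd (isUnit_of_dvd_one hdvd) hf.not_isUnit⟩
  mul_mem' hp hq := ⟨mul_ne_zero hp.1 hq.1, fun f hm hf hdvd =>
    (hf.prime.dvd_or_dvd hdvd).elim (hp.2 f hm hf) (hq.2 f hm hf)⟩

theorem mem_factorsIn :
    p ∈ factorsIn A ↔ p ≠ 0 ∧ ∀ f : F[X], f.Monic → Irreducible f → f ∣ p → f ∈ A :=
  Iff.rfl

theorem factorsIn_mono (h : A ⊆ B) : factorsIn A ≤ factorsIn B :=
  fun _ hp => ⟨hp.1, fun f hm hf hdvd => h (hp.2 f hm hf hdvd)⟩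

theorem mem_factorsIn_of_isUnit (hp : IsUnit p) : p ∈ factorsIn A :=
  ⟨hp.ne_zero, fun _ _ hf hdvd => absurd (isUnit_of_dvd_unit hdvd hp) hf.not_isUnit⟩

theorem mem_factorsIn_iff_normalize_mem [DecidableEq F] (hp : Irreducible p) :
    p ∈ factorsIn A ↔ normalize p ∈ A := by
  refine ⟨fun h => h.2 _ (monic_normalize hp.ne_zero)
    ((associated_normalize p).irreducible hp) (normalize_dvd_iff.2 dvd_rfl),
    fun h => ⟨hp.ne_zero, fun f hm hf hdvd => ?_⟩⟩
  have hfp : Associated f (normalize p) :=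
    (hf.associated_of_dvd hp hdvd).trans (associated_normalize p)
  rwa [eq_of_monic_of_associated hm (monic_normalize hp.ne_zero) hfp]

theorem mem_factorsIn_iff_mem (hm : p.Monic) (hp : Irreducible p) :
    p ∈ factorsIn A ↔ p ∈ A := by
  classical
  rw [mem_factorsIn_iff_normalize_mem hp, hm.normalize_eq_self]

theorem isCoprime_of_mem_factorsIn_compl (hp : p ∈ factorsIn A) (hq : q ∈ factorsIn Aᶜ) :
    IsCoprime p q := by
  classical
  refine isCoprime_of_irreducible_dvd (fun h => hp.1 h.1) fun z hz hzp hzq => ?_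
  have hm : (normalize z).Monic := monic_normalize hz.ne_zero
  have hi : Irreducible (normalize z) := (associated_normalize z).irreducible hz
  exact hq.2 _ hm hi (normalize_dvd_iff.2 hzq) (hp.2 _ hm hi (normalize_dvd_iff.2 hzp))

theorem monic_X_sub_one : (X - 1 : F[X]).Monic := by
  simpa only [C_1] using monic_X_sub_C (1 : F)

theorem irreducible_X_sub_one : Irreducible (X - 1 : F[X]) := by
  simpa only [C_1] using irreducible_X_sub_C (1 : F)

theorem exists_mul_eq_of_factorsIn_compl (A : Set F[X]) (hp : p ≠ 0) :
    ∃ b ∈ factorsIn A, ∃ c ∈ factorsIn Aᶜ, b * c = p := by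
  classical
  rw [← Submonoid.mem_sup]
  induction p using UniqueFactorizationMonoid.induction_on_prime with
  | h₁ => exact absurd rfl hp
  | h₂ u hu => exact Submonoid.mem_sup_left (mem_factorsIn_of_isUnit hu)
  | h₃ c z hc hz ih =>
    refine mul_mem ?_ (ih hc)
    by_cases hzA : normalize z ∈ A
    · exact Submonoid.mem_sup_left ((mem_factorsIn_iff_normalize_mem hz.irreducible).2 hzA)
    · exact Submonoid.mem_sup_right ((mem_factorsIn_iff_normalize_mem hz.irreducible).2 hzA)

end FactorsIn

section PrimaryPart

variable {F V : Type*} [Field F] [AddCommGroup V] [Module F V] {φ ψ : Module.End F V}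
  {A B : Set F[X]} {f : F[X]}

/-- The sum of the primary components of `φ` at the monic irreducible polynomials in `A`, encoded
as the set of vectors annihilated by `p(φ)` for some nonzero `p` with all its monic irreducible
factors in `A`. -/
def primaryPart (φ : Module.End F V) (A : Set F[X]) : Submodule F V where
  carrier := {v | ∃ p ∈ factorsIn A, aeval φ p v = 0}
  zero_mem' := ⟨1, one_mem _, map_zero _⟩
  add_mem' := by
    rintro v w ⟨p, hp, hpv⟩ ⟨q, hq, hqw⟩
    refine ⟨p * q, mul_mem hp hq, ?_⟩
    rw [map_add, map_mul, Module.End.mul_apply _ _ w, hqw, ← map_mul, mul_comm, map_mul,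
      Module.End.mul_apply, hpv, map_zero, map_zero, add_zero]
  smul_mem' := by
    rintro c v ⟨p, hp, hpv⟩
    exact ⟨p, hp, by rw [map_smul, hpv, smul_zero]⟩

theorem primaryPart_mono (h : A ⊆ B) : primaryPart φ A ≤ primaryPart φ B :=
  fun _ ⟨p, hp, hpv⟩ => ⟨p, factorsIn_mono h hp, hpv⟩

theorem ker_aeval_le_primaryPart (hf : f ∈ factorsIn A) :
    LinearMap.ker (aeval φ f) ≤ primaryPart φ A :=
  fun _ hv => ⟨f, hf, hv⟩

theorem mapsTo_primaryPart (φ : Module.End F V) (A : Set F[X]) :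
    Set.MapsTo φ (primaryPart φ A) (primaryPart φ A) := by
  rintro v ⟨p, hp, hpv⟩
  refine ⟨p, hp, ?_⟩
  have hcomm : Commute (aeval φ p) φ := by
    simpa only [aeval_X] using (Commute.all p X).map (aeval φ)
  rw [← Module.End.mul_apply, hcomm.eq, Module.End.mul_apply, hpv, map_zero]

theorem disjoint_primaryPart_compl (φ : Module.End F V) (A : Set F[X]) :
    Disjoint (primaryPart φ A) (primaryPart φ Aᶜ) := by
  rw [Submodule.disjoint_def]
  rintro v ⟨p, hp, hpv⟩ ⟨q, hq, hqv⟩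
  exact Submodule.disjoint_def.1
    (disjoint_ker_aeval_of_isCoprime φ (isCoprime_of_mem_factorsIn_compl hp hq)) v hpv hqv

theorem primaryPart_inter (φ : Module.End F V) (A B : Set F[X]) :
    primaryPart φ (A ∩ B) = primaryPart φ A ⊓ primaryPart φ B := by
  classical
  refine le_antisymm (le_inf (primaryPart_mono Set.inter_subset_left)
    (primaryPart_mono Set.inter_subset_right)) ?_
  rintro v ⟨⟨p, hp, hpv⟩, ⟨q, hq, hqv⟩⟩
  refine ⟨EuclideanDomain.gcd p q,
    ⟨fun h => hp.1 (EuclideanDomain.gcd_eq_zero_iff.1 h).1, fun f hm hf hdvd =>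
      ⟨hp.2 f hm hf (hdvd.trans (EuclideanDomain.gcd_dvd_left p q)),
        hq.2 f hm hf (hdvd.trans (EuclideanDomain.gcd_dvd_right p q))⟩⟩, ?_⟩
  rw [EuclideanDomain.gcd_eq_gcd_ab, mul_comm p, mul_comm q, map_add, map_mul, map_mul,
    LinearMap.add_apply, Module.End.mul_apply, Module.End.mul_apply, hpv, hqv, map_zero, map_zero,
    add_zero]

theorem aeval_eqOn {W : Submodule F V} (h : Set.EqOn φ ψ W) (hW : Set.MapsTo ψ W W) (p : F[X]) :
    Set.EqOn (aeval φ p) (aeval ψ p) W := by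
  induction p using Polynomial.induction_on with
  | C a => intro v _; simp only [aeval_C]
  | add p q hp hq =>
    intro v hv
    simp only [map_add, LinearMap.add_apply, hp hv, hq hv]
  | monomial n a ih =>
    intro v hv
    rw [pow_succ, ← mul_assoc, map_mul _ _ X, map_mul _ _ X, aeval_X, aeval_X,
      Module.End.mul_apply, Module.End.mul_apply, h hv, ih (hW hv)]

theorem primaryPart_inf_le_of_eqOn {W : Submodule F V} (h : Set.EqOn φ ψ W)
    (hW : Set.MapsTo ψ W W) : W ⊓ primaryPart ψ A ≤ primaryPart φ A :=
  fun _ ⟨hv, p, hp, hpv⟩ => ⟨p, hp, (aeval_eqOn h hW p hv).trans hpv⟩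

theorem primaryPart_le_of_eqOn (h : Set.EqOn φ ψ (primaryPart ψ A)) :
    primaryPart ψ A ≤ primaryPart φ A := by
  simpa only [inf_idem] using primaryPart_inf_le_of_eqOn (A := A) h (mapsTo_primaryPart ψ A)

theorem le_primaryPart_of_eqOn_id {W : Submodule F V} (h : Set.EqOn φ id W) (hA : X - 1 ∈ A) :
    W ≤ primaryPart φ A := fun v hv => by
  refine ⟨X - 1, (mem_factorsIn_iff_mem monic_X_sub_one irreducible_X_sub_one).2 hA, ?_⟩
  rw [map_sub, aeval_X, map_one, LinearMap.sub_apply, h hv, Module.End.one_apply, id_eq, sub_self]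

section FiniteDimensional

variable [FiniteDimensional F V]

theorem isCompl_primaryPart_compl (φ : Module.End F V) (A : Set F[X]) :
    IsCompl (primaryPart φ A) (primaryPart φ Aᶜ) := by
  refine ⟨disjoint_primaryPart_compl φ A, codisjoint_iff_le_sup.2 ?_⟩
  obtain ⟨b, hb, c, hc, hbc⟩ := exists_mul_eq_of_factorsIn_compl A φ.charpoly_monic.ne_zero
  calc ⊤ = LinearMap.ker (aeval φ (b * c)) := by
        rw [hbc, LinearMap.aeval_self_charpoly, LinearMap.ker_zero]
    _ = LinearMap.ker (aeval φ b) ⊔ LinearMap.ker (aeval φ c) :=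
        (sup_ker_aeval_eq_ker_aeval_mul_of_coprime φ
          (isCoprime_of_mem_factorsIn_compl hb hc)).symm
    _ ≤ primaryPart φ A ⊔ primaryPart φ Aᶜ :=
        sup_le_sup (ker_aeval_le_primaryPart hb) (ker_aeval_le_primaryPart hc)

theorem ker_aeval_ne_bot_of_dvd_charpoly (hf : Irreducible f) (hdvd : f ∣ φ.charpoly) :
    LinearMap.ker (aeval φ f) ≠ ⊥ := by
  -- Over `E = F[X]/(f)` the root of `f` is an eigenvalue of `φ`, so `f(φ)` cannot be injective.
  intro hker
  have : Fact (Irreducible f) := ⟨hf⟩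
  set E := AdjoinRoot f
  have hroot : (φ.baseChange E).charpoly.IsRoot (AdjoinRoot.root f) := by
    rwa [LinearMap.charpoly_baseChange, IsRoot, eval_map_algebraMap, AdjoinRoot.aeval_eq,
      AdjoinRoot.mk_eq_zero]
  obtain ⟨v, hv⟩ :=
    ((Module.End.hasEigenvalue_iff_isRoot_charpoly _ _).2 hroot).exists_hasEigenvector
  have hzero : (aeval φ f).baseChange E v = 0 := by
    have hbase : aeval (φ.baseChange E) (f.map (algebraMap F E)) = (aeval φ f).baseChange E :=
      (aeval_map_algebraMap _ _ _).trans
        (aeval_algHom_apply (Module.End.baseChangeHom F E V) φ f)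
    rw [← hbase, Module.End.aeval_apply_of_hasEigenvector hv, eval_map_algebraMap,
      AdjoinRoot.aeval_eq, AdjoinRoot.mk_self, zero_smul]
  have hinj : Function.Injective ((aeval φ f).baseChange E) :=
    Module.Flat.lTensor_preserves_injective_linearMap _ (LinearMap.ker_eq_bot.1 hker)
  exact hv.2 (hinj (hzero.trans (map_zero _).symm))

theorem primaryPart_eq_top_iff : primaryPart φ A = ⊤ ↔ φ.charpoly ∈ factorsIn A := by
  refine ⟨fun h => ⟨φ.charpoly_monic.ne_zero, fun f hm hf hdvd => ?_⟩, fun h => ?_⟩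
  · by_contra hfA
    have hbot : primaryPart φ Aᶜ = ⊥ :=
      disjoint_top.1 (h ▸ (disjoint_primaryPart_compl φ A).symm)
    exact ker_aeval_ne_bot_of_dvd_charpoly hf hdvd (eq_bot_iff.2 (hbot ▸
      ker_aeval_le_primaryPart ((mem_factorsIn_iff_mem hm hf).2 hfA)))
  · rw [Submodule.eq_top_iff']
    exact fun v => ⟨φ.charpoly, h, by rw [LinearMap.aeval_self_charpoly, LinearMap.zero_apply]⟩

theorem range_aeval_pow_finrank_le_primaryPart (φ : Module.End F V) (hf : Irreducible f) :
    LinearMap.range (aeval φ f ^ Module.finrank F V) ≤ primaryPart φ {f}ᶜ := by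
  rintro _ ⟨w, rfl⟩
  obtain ⟨b, hb, hfb⟩ := (FiniteMultiplicity.of_not_isUnit hf.not_isUnit
    φ.charpoly_monic.ne_zero).exists_eq_pow_mul_and_not_dvd
  have hb_mem : b ∈ factorsIn {f}ᶜ := by
    refine ⟨right_ne_zero_of_mul (hb ▸ φ.charpoly_monic.ne_zero), fun k _ _ hkb hkf => hfb ?_⟩
    rwa [← Set.mem_singleton_iff.1 hkf]
  have hbw : aeval φ b w ∈ LinearMap.ker (aeval φ f ^ Module.finrank F V) := by
    refine Module.End.ker_pow_le_ker_pow_finrank _ (multiplicity f φ.charpoly) ?_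
    rw [LinearMap.mem_ker, ← map_pow, ← Module.End.mul_apply, ← map_mul, ← hb,
      LinearMap.aeval_self_charpoly, LinearMap.zero_apply]
  refine ⟨b, hb_mem, ?_⟩
  rw [← map_pow, ← Module.End.mul_apply, ← map_mul, mul_comm, map_mul, Module.End.mul_apply,
    map_pow]
  exact hbw

theorem ker_eq_and_range_eq_aeval_pow_finrank (φ : Module.End F V) (hm : f.Monic)
    (hf : Irreducible f) :
    LinearMap.ker (aeval φ f ^ Module.finrank F V) = primaryPart φ {f} ∧
      LinearMap.range (aeval φ f ^ Module.finrank F V) = primaryPart φ {f}ᶜ := by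
  have hker : LinearMap.ker (aeval φ f ^ Module.finrank F V) ≤ primaryPart φ {f} := by
    rw [← map_pow]
    exact ker_aeval_le_primaryPart
      (pow_mem ((mem_factorsIn_iff_mem hm hf).2 (Set.mem_singleton f)) _)
  have hrange := range_aeval_pow_finrank_le_primaryPart φ hf
  have hdisj := disjoint_primaryPart_compl φ {f}
  refine eq_and_eq_of_isCompl_of_disjoint_of_le ?_ hdisj hker hrange
  refine (Submodule.isCompl_iff_disjoint _ _ ?_).2 (hdisj.mono hker hrange)
  rw [add_comm, LinearMap.finrank_range_add_finrank_ker]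

end FiniteDimensional

end PrimaryPart

section Complements

variable {R M : Type*} [Ring R] [AddCommGroup M] [Module R M] {U W : Submodule R M}

theorem exists_eqOn_of_isCompl (h : IsCompl U W) (φ ψ : Module.End R M) :
    ∃ χ : Module.End R M, Set.EqOn χ φ U ∧ Set.EqOn χ ψ W :=
  ⟨LinearMap.ofIsCompl h (φ.domRestrict U) (ψ.domRestrict W),
    fun v hv => LinearMap.ofIsCompl_apply_left h ⟨v, hv⟩,
    fun v hv => LinearMap.ofIsCompl_apply_right h ⟨v, hv⟩⟩

theorem exists_mul_eq_of_isCompl (h : IsCompl U W) (g : (Module.End R M)ˣ)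
    (hU : Set.MapsTo g.val U U) (hW : Set.MapsTo g.val W W) :
    ∃ x y : (Module.End R M)ˣ, g = x * y ∧
      Set.EqOn x.val g.val U ∧ Set.EqOn x.val id W ∧
      Set.EqOn y.val id U ∧ Set.EqOn y.val g.val W := by
  obtain ⟨x, hxU, hxW⟩ := exists_eqOn_of_isCompl h g.val 1
  obtain ⟨y, hyU, hyW⟩ := exists_eqOn_of_isCompl h 1 g.val
  have hxy : x * y = g.val := LinearMap.ext_on_codisjoint h.codisjoint
    (fun v hv => by rw [Module.End.mul_apply, hyU hv, Module.End.one_apply, hxU hv])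
    (fun v hv => by rw [Module.End.mul_apply, hyW hv, hxW (hW hv), Module.End.one_apply])
  have hyx : y * x = g.val := LinearMap.ext_on_codisjoint h.codisjoint
    (fun v hv => by rw [Module.End.mul_apply, hxU hv, hyU (hU hv), Module.End.one_apply])
    (fun v hv => by rw [Module.End.mul_apply, hxW hv, Module.End.one_apply, hyW hv])
  obtain ⟨hx, hy⟩ := (Commute.isUnit_mul_iff (hxy.trans hyx.symm)).1 (hxy ▸ g.isUnit)
  exact ⟨hx.unit, hy.unit, Units.ext hxy.symm, hxU, hxW, hyU, hyW⟩

end Complements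

section Decomposition

/-- The set `A_d` of polynomials other than `X - 1` of degree divisible by `d`. The `d`-part of `g`
acts as `g` on the primary components of `g` at the monic irreducible polynomials in `A_d`, and
trivially on the other ones. -/
def dFactors (F : Type*) [Field F] (d : ℕ) : Set F[X] :=
  {f | d ∣ f.natDegree} \ {X - 1}

theorem X_sub_one_notMem_dFactors {F : Type*} [Field F] (d : ℕ) : X - 1 ∉ dFactors F d :=
  fun h => h.2 rfl

variable {F V : Type} [Field F] [AddCommGroup V] [Module F V] [FiniteDimensional F V]
  {A : Set F[X]} {d : ℕ} {x y : (Module.End F V)ˣ}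

theorem primaryKer_eq_and_primaryRange_eq (x : (Module.End F V)ˣ) :
    primaryKer x = primaryPart x.val {X - 1} ∧ primaryRange x = primaryPart x.val {X - 1}ᶜ := by
  simpa only [primaryKer, primaryRange, map_sub, aeval_X, map_one] using
    ker_eq_and_range_eq_aeval_pow_finrank x.val monic_X_sub_one irreducible_X_sub_one

theorem primaryRange_eq_primaryPart (hA : X - 1 ∉ A)
    (hx : primaryPart x.val (insert (X - 1) A) = ⊤) : primaryRange x = primaryPart x.val A := by
  have hset : insert (X - 1) A ∩ {X - 1}ᶜ = A := by
    rw [← Set.sdiff_eq, Set.insert_sdiff_self_of_notMem hA]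
  rw [(primaryKer_eq_and_primaryRange_eq x).2,
    ← top_inf_eq (primaryPart _ {X - 1}ᶜ), ← hx, ← primaryPart_inter, hset]

theorem primaryKer_eq_primaryPart_compl (hA : X - 1 ∉ A)
    (hx : primaryPart x.val (insert (X - 1) A) = ⊤) : primaryKer x = primaryPart x.val Aᶜ := by
  have hset : insert (X - 1) A ∩ Aᶜ = {X - 1} := by
    rw [← Set.sdiff_eq, Set.insert_sdiff_of_notMem _ hA, Set.sdiff_self,
      LawfulSingleton.insert_empty_eq]
  rw [(primaryKer_eq_and_primaryRange_eq x).1, ← top_inf_eq (primaryPart _ Aᶜ),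
    ← hx, ← primaryPart_inter, hset]

theorem mem_dElements_iff :
    x ∈ dElements F V d ↔
      Set.EqOn x.val id (primaryPart x.val (dFactors F d)ᶜ) ∧
        primaryPart x.val (insert (X - 1) (dFactors F d)) = ⊤ := by
  have hfactors : (∀ f : F[X], f.Monic → Irreducible f → f ∣ x.val.charpoly → f ≠ X - 1 →
      d ∣ f.natDegree) ↔ primaryPart x.val (insert (X - 1) (dFactors F d)) = ⊤ := by
    rw [primaryPart_eq_top_iff, dFactors, Set.insert_sdiff_singleton]
    simp only [mem_factorsIn, Set.mem_insert_iff, or_iff_not_imp_left, Set.mem_ofPred_eq,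
      (LinearMap.charpoly_monic _).ne_zero, ne_eq, not_false_eq_true, true_and]
  refine (and_congr_right' hfactors).trans (and_congr_left fun hx => ?_)
  rw [← primaryKer_eq_primaryPart_compl (X_sub_one_notMem_dFactors d) hx]
  exact Iff.rfl

theorem mem_dRegular_iff (hx : x ∈ dElements F V d) :
    y ∈ dRegular F V d x ↔
      Set.EqOn y.val id (primaryPart x.val (dFactors F d)) ∧
        Set.MapsTo y.val (primaryPart x.val (dFactors F d)ᶜ)
          (primaryPart x.val (dFactors F d)ᶜ) ∧
        primaryPart y.val (dFactors F d)ᶜ = ⊤ := by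
  obtain ⟨-, hx_top⟩ := mem_dElements_iff.1 hx
  rw [← primaryRange_eq_primaryPart (X_sub_one_notMem_dFactors d) hx_top,
    ← primaryKer_eq_primaryPart_compl (X_sub_one_notMem_dFactors d) hx_top, primaryPart_eq_top_iff]
  refine and_congr Iff.rfl (and_congr Iff.rfl ?_)
  simp only [mem_factorsIn, dFactors, Set.mem_compl_iff, Set.mem_sdiff, Set.mem_ofPred_eq,
    Set.mem_singleton_iff, (LinearMap.charpoly_monic _).ne_zero, ne_eq, not_false_eq_true,
    true_and, not_and']

theorem commute_of_mem_dElements_of_mem_dRegular (hx : x ∈ dElements F V d)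
    (hy : y ∈ dRegular F V d x) : Commute x y := by
  obtain ⟨hxW, -⟩ := mem_dElements_iff.1 hx
  obtain ⟨hyU, hyW, -⟩ := (mem_dRegular_iff hx).1 hy
  refine Units.ext (LinearMap.ext_on_codisjoint
    (isCompl_primaryPart_compl x.val (dFactors F d)).codisjoint (fun v hv => ?_) (fun v hv => ?_))
  · simp only [Units.val_mul, Module.End.mul_apply, hyU hv, hyU (mapsTo_primaryPart _ _ hv), id_eq]
  · simp only [Units.val_mul, Module.End.mul_apply, hxW hv, hxW (hyW hv), id_eq]

theorem eqOn_primaryPart_mul (hx : x ∈ dElements F V d) (hy : y ∈ dRegular F V d x) :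
    Set.EqOn x.val (x * y).val (primaryPart (x * y).val (dFactors F d)) ∧
      Set.EqOn x.val id (primaryPart (x * y).val (dFactors F d)ᶜ) := by
  obtain ⟨hxW, -⟩ := mem_dElements_iff.1 hx
  obtain ⟨hyU, hyW, hy_top⟩ := (mem_dRegular_iff hx).1 hy
  set A := dFactors F d
  have hgU : Set.EqOn (x * y).val x.val (primaryPart x.val A) := fun v hv => by
    rw [Units.val_mul, Module.End.mul_apply, hyU hv, id_eq]
  have hgW : Set.EqOn (x * y).val y.val (primaryPart x.val Aᶜ) := fun v hv => by
    rw [Units.val_mul, Module.End.mul_apply, hxW (hyW hv), id_eq]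
  have hW : primaryPart x.val Aᶜ ≤ primaryPart (x * y).val Aᶜ := by
    simpa only [hy_top, inf_top_eq] using primaryPart_inf_le_of_eqOn (A := Aᶜ) hgW hyW
  obtain ⟨hU_eq, hW_eq⟩ := eq_and_eq_of_isCompl_of_disjoint_of_le
    (isCompl_primaryPart_compl x.val A) (disjoint_primaryPart_compl _ A)
    (primaryPart_le_of_eqOn hgU) hW
  exact ⟨hU_eq ▸ hgU.symm, hW_eq ▸ hxW⟩

theorem left_eq_of_mul_eq_mul_of_mem_dElements {x' y' : (Module.End F V)ˣ}
    (hx : x ∈ dElements F V d) (hy : y ∈ dRegular F V d x)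
    (hx' : x' ∈ dElements F V d) (hy' : y' ∈ dRegular F V d x') (h : x * y = x' * y') :
    x = x' := by
  obtain ⟨hU, hW⟩ := eqOn_primaryPart_mul hx hy
  obtain ⟨hU', hW'⟩ := eqOn_primaryPart_mul hx' hy'
  rw [← h] at hU' hW'
  exact Units.ext (LinearMap.ext_on_codisjoint (isCompl_primaryPart_compl _ _).codisjoint
    (hU.trans hU'.symm) (hW.trans hW'.symm))

theorem exists_mem_dElements_mem_dRegular_mul_eq (d : ℕ) (g : (Module.End F V)ˣ) :
    ∃ x ∈ dElements F V d, ∃ y ∈ dRegular F V d x, g = x * y := by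
  set A := dFactors F d
  have h1 : X - 1 ∈ Aᶜ := X_sub_one_notMem_dFactors d
  have hUW := isCompl_primaryPart_compl g.val A
  have hgW := mapsTo_primaryPart g.val Aᶜ
  obtain ⟨x, y, hg, hxU, hxW, hyU, hyW⟩ :=
    exists_mul_eq_of_isCompl hUW g (mapsTo_primaryPart g.val A) hgW
  obtain ⟨hU_eq, hW_eq⟩ := eq_and_eq_of_isCompl_of_disjoint_of_le hUW
    (disjoint_primaryPart_compl x.val A) (primaryPart_le_of_eqOn hxU)
    (le_primaryPart_of_eqOn_id hxW h1)
  have hx_top : primaryPart x.val (insert (X - 1) A) = ⊤ := by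
    rw [eq_top_iff, ← hUW.sup_eq_top]
    exact sup_le (hU_eq.trans_le (primaryPart_mono (Set.subset_insert _ _)))
      (le_primaryPart_of_eqOn_id hxW (Set.mem_insert _ _))
  have hy_top : primaryPart y.val Aᶜ = ⊤ := by
    rw [eq_top_iff, ← hUW.sup_eq_top]
    exact sup_le (le_primaryPart_of_eqOn_id hyU h1) (primaryPart_le_of_eqOn hyW)
  have hx : x ∈ dElements F V d := mem_dElements_iff.2 ⟨hW_eq ▸ hxW, hx_top⟩
  refine ⟨x, hx, y, (mem_dRegular_iff hx).2 ⟨hU_eq ▸ hyU, hW_eq ▸ ?_, hy_top⟩, hg⟩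
  exact hgW.congr hyW.symm

theorem d_decomposition_exists_unique_general (d : ℕ) (g : (Module.End F V)ˣ) :
    ∃ x ∈ dElements F V d, ∃ y ∈ dRegular F V d x, g = x * y ∧ Commute x y ∧
      ∀ x' ∈ dElements F V d, ∀ y' ∈ dRegular F V d x', g = x' * y' → x' = x ∧ y' = y := by
  obtain ⟨x, hx, y, hy, rfl⟩ := exists_mem_dElements_mem_dRegular_mul_eq d g
  refine ⟨x, hx, y, hy, rfl, commute_of_mem_dElements_of_mem_dRegular hx hy,
    fun x' hx' y' hy' hmul => ?_⟩
  obtain rfl : x = x' := left_eq_of_mul_eq_mul_of_mem_dElements hx hy hx' hy' hmul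
  exact ⟨rfl, (mul_left_cancel hmul).symm⟩

end Decomposition

/-- For `d ≥ 1`, every `g ∈ G = GL(V)` has a unique
`d`-decomposition: there is a unique pair `(x, y)` with `x ∈ 𝒳_d`, `y ∈ 𝒴_d(x)`
and `g = x y`; moreover `x` and `y` commute. -/
theorem d_decomposition_exists_unique
    (F V : Type) [Field F] [Fintype F] [AddCommGroup V] [Module F V]
    [FiniteDimensional F V] (hn : 1 ≤ Module.finrank F V)
    (d : ℕ) (hd : 1 ≤ d) :
    ∀ g : (Module.End F V)ˣ,
      ∃! p : (Module.End F V)ˣ × (Module.End F V)ˣ,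
        p.1 ∈ dElements F V d ∧ p.2 ∈ dRegular F V d p.1 ∧ g = p.1 * p.2 ∧
          p.1 * p.2 = p.2 * p.1 := by
  intro g
  obtain ⟨x, hx, y, hy, hg, hxy, huniq⟩ := d_decomposition_exists_unique_general d g
  exact ⟨(x, y), ⟨hx, hy, hg, hxy⟩, fun q ⟨hx', hy', hg', _⟩ =>
    Prod.ext_iff.2 (huniq q.1 hx' q.2 hy' hg')⟩
end

section
/- Fix an integer d ≥ 1. Let x, x′ ∈ 𝒳_d, y ∈ 𝒴_d(x) and y′ ∈ 𝒴_d(x′). Then xy and x′y′ are conjugate in G if and only if there exists g ∈ G with g⁻¹ x g = x′ and g⁻¹ y g = y′. Consequently G is the disjoint union, over representatives x of the G-conjugacy classes in 𝒳_d and representatives y of the C_G(x)-conjugacy classes in 𝒴_d(x), of the G-conjugacy classes of the elements xy. -/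
open Polynomial

/-!
The proof replaces conditions on subspaces by polynomial identities. For `x ∈ 𝒳_d` and
`y ∈ 𝒴_d(x)` the elements `x` and `y` commute and `(x - 1)(y - 1) = 0`, so `xy = x + y - 1` and
more generally `f(xy) = f(x) + f(y) - f(1)` for every polynomial `f`. Moreover `P(x)(x - 1) = 0`
and `Q(y) = 0`, where `P` has only factors `≠ X - 1` of degree divisible by `d` and `Q` has no such
factor. Since `P` and `Q` are coprime, there is a polynomial `r` with `r(x) = x`, `r(y) = 1` and
`r(1) = 1`, so that `r(xy) = x`. One `r` serves two pairs at once, and `r(g⁻¹(xy)g) = g⁻¹r(xy)g`,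
so anything conjugating `xy` to `x'y'` conjugates `x` to `x'`. Conversely, the same `r` for a
factorization `PQ` of the characteristic polynomial of `g` splits `g` as `r(g)` times
`g + 1 - r(g)`.
-/

section Algebra

variable {R A : Type*} [CommRing R] [Ring A] [Algebra R A]

theorem mul_pow_eq_add_pow_sub_one {x y : A} (hxy : Commute x y) (h : (x - 1) * (y - 1) = 0)
    (n : ℕ) :
    (x * y) ^ n = x ^ n + y ^ n - 1 := by
  have hn : (x ^ n - 1) * (y ^ n - 1) = 0 := by
    rw [← geom_sum_mul x, ← mul_geom_sum y, mul_assoc, ← mul_assoc (x - 1), h, zero_mul, mul_zero]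
  rw [hxy.mul_pow, ← sub_eq_zero, ← hn]
  noncomm_ring

theorem aeval_mul_eq_add_sub {x y : A} (hxy : Commute x y) (h : (x - 1) * (y - 1) = 0) (f : R[X]) :
    aeval (x * y) f = aeval x f + aeval y f - algebraMap R A (f.eval 1) := by
  induction f using Polynomial.induction_on' with
  | add p q hp hq =>
    simp only [map_add, eval_add, hp, hq]
    abel
  | monomial n a =>
    simp only [aeval_monomial, mul_pow_eq_add_pow_sub_one hxy h, eval_monomial, one_pow, mul_one,
      mul_add, mul_sub]

theorem aeval_mul_eq_left {x y : A} (hxy : Commute x y) (h : (x - 1) * (y - 1) = 0) {P Q r : R[X]}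
    (hP : aeval x (P * (X - 1)) = 0) (hQ : aeval y Q = 0) (hPr : P * (X - 1) ∣ r - X)
    (hQr : Q ∣ r - 1) : aeval (x * y) r = x := by
  have hx : aeval x r = x := by
    simpa [sub_eq_zero] using aeval_eq_zero_of_dvd_aeval_eq_zero hPr hP
  have hy : aeval y r = 1 := by
    simpa [sub_eq_zero] using aeval_eq_zero_of_dvd_aeval_eq_zero hQr hQ
  have h1 : r.eval 1 = 1 := by
    obtain ⟨c, hc⟩ := hPr
    simpa [sub_eq_zero] using congrArg (eval 1) hc
  rw [aeval_mul_eq_add_sub hxy h, hx, hy, h1, map_one, add_sub_cancel_right]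

theorem aeval_units_conj (g : Aˣ) (a : A) (f : R[X]) :
    aeval (↑g⁻¹ * a * g) f = ↑g⁻¹ * aeval a f * g := by
  induction f using Polynomial.induction_on' with
  | add p q hp hq => simp only [map_add, hp, hq, mul_add, add_mul]
  | monomial n c =>
    rw [aeval_monomial, aeval_monomial, Units.conj_pow', ← mul_assoc, ← mul_assoc, ← mul_assoc,
      Algebra.commutes, mul_assoc _ (algebraMap R A c)]

theorem exists_dvd_sub_X_and_dvd_sub_one {P Q : R[X]} (hPQ : IsCoprime P Q) :
    ∃ r : R[X], P * (X - 1) ∣ r - X ∧ Q ∣ r - 1 := by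
  obtain ⟨a, b, hab⟩ := hPQ
  exact ⟨b * Q * X + a * P, ⟨-a, by linear_combination X * hab⟩,
    ⟨b * (X - 1), by linear_combination hab⟩⟩

theorem dvd_comp_of_dvd_sub_X {P r : R[X]} (h : P ∣ r - X) : P ∣ P.comp r := by
  have hr : r - X ∣ P.comp r - P := by
    simpa [eval_map, comp] using sub_dvd_eval_sub r X (P.map C)
  simpa using dvd_add (h.trans hr) dvd_rfl

theorem exists_commute_mul_eq_of_aeval_mul_eq_zero {a : A} {P Q : R[X]} (hPQ : IsCoprime P Q)
    (ha : aeval a (P * Q) = 0) :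
    ∃ x y : A, Commute x y ∧ x * y = a ∧ (x - 1) * (y - 1) = 0 ∧
      aeval x (P * (X - 1)) = 0 ∧ aeval y (Q * (X - 1)) = 0 := by
  obtain ⟨r, hPr', hQr⟩ := exists_dvd_sub_X_and_dvd_sub_one hPQ
  have hPr : P ∣ r - X := (dvd_mul_right P _).trans hPr'
  have vanish {u v : R[X]} (hu : P ∣ u) (hv : Q ∣ v) : aeval a (u * v) = 0 :=
    aeval_eq_zero_of_dvd_aeval_eq_zero (mul_dvd_mul hu hv) ha
  have vanish_swap {u v : R[X]} (hu : P ∣ u) (hv : Q ∣ v) : aeval a (v * u) = 0 :=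
    mul_comm u v ▸ vanish hu hv
  set s : R[X] := X + 1 - r with hs
  have hPs : P ∣ s - 1 := by rw [hs, ← dvd_neg]; convert hPr using 1; ring
  have hQs : Q ∣ s - X := by rw [hs, ← dvd_neg]; convert hQr using 1; ring
  have hprod : r * s = X - (r - X) * (r - 1) := by rw [hs]; ring
  refine ⟨aeval a r, aeval a s, (Commute.all r s).map (aeval a), ?_, ?_, ?_, ?_⟩
  · rw [← map_mul, hprod, map_sub, vanish hPr hQr, sub_zero, aeval_X]
  · simpa using vanish_swap hPs hQr
  · simpa [aeval_comp] using vanish (dvd_comp_of_dvd_sub_X hPr) hQr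
  · simpa [aeval_comp] using vanish_swap hPs (dvd_comp_of_dvd_sub_X hQs)

end Algebra

/-- All monic irreducible factors of `p` satisfy `S`. Every polynomial divides `0`, so for `p = 0`
this says that all monic irreducible polynomials satisfy `S`. -/
def FactorsSatisfy {F : Type*} [Field F] (S : F[X] → Prop) (p : F[X]) : Prop :=
  ∀ f : F[X], f.Monic → Irreducible f → f ∣ p → S f

section Factors

variable {F : Type*} [Field F] {S T : F[X] → Prop} {p q : F[X]}

theorem FactorsSatisfy.imp (hST : ∀ f, S f → T f) (hp : FactorsSatisfy S p) :
    FactorsSatisfy T p :=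
  fun f hm hf hd => hST f (hp f hm hf hd)

theorem FactorsSatisfy.mul (hp : FactorsSatisfy S p) (hq : FactorsSatisfy S q) :
    FactorsSatisfy S (p * q) :=
  fun f hm hf hd => (hf.prime.dvd_or_dvd hd).elim (hp f hm hf) (hq f hm hf)

theorem factorsSatisfy_of_isUnit (hp : IsUnit p) : FactorsSatisfy S p :=
  fun _ _ hf hd => absurd (isUnit_of_dvd_unit hd hp) hf.not_isUnit

theorem FactorsSatisfy.of_irreducible {f : F[X]} (hp : Irreducible p) (hm : f.Monic)
    (hf : Irreducible f) (hd : f ∣ p) (hS : S f) : FactorsSatisfy S p := by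
  intro g hgm hg hgd
  have hfg : Associated f g :=
    (hf.associated_of_dvd hp hd).trans (hg.associated_of_dvd hp hgd).symm
  rwa [← eq_of_monic_of_associated hm hgm hfg]

theorem FactorsSatisfy.isCoprime (hp : FactorsSatisfy S p)
    (hq : FactorsSatisfy (fun f => ¬ S f) q) : IsCoprime p q := by
  classical
  have not_both {f : F[X]} (hf : Irreducible f) (hfp : f ∣ p) (hfq : f ∣ q) : False := by
    have hass : Associated (normalize f) f := normalize_associated f
    have hirr : Irreducible (normalize f) := hass.irreducible_iff.2 hf
    have hmon : (normalize f).Monic := monic_normalize hf.ne_zero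
    exact hq _ hmon hirr (hass.dvd.trans hfq) (hp _ hmon hirr (hass.dvd.trans hfp))
  refine isCoprime_of_irreducible_dvd ?_ fun f hf => not_both hf
  rintro ⟨rfl, rfl⟩
  exact not_both irreducible_X (dvd_zero X) (dvd_zero X)

theorem exists_mul_eq_factorsSatisfy (S : F[X] → Prop) (hp : p ≠ 0) :
    ∃ P Q : F[X], P * Q = p ∧ FactorsSatisfy S P ∧ FactorsSatisfy (fun f => ¬ S f) Q := by
  induction p using UniqueFactorizationMonoid.induction_on_prime with
  | h₁ => exact absurd rfl hp
  | h₂ u hu => exact ⟨u, 1, mul_one u, factorsSatisfy_of_isUnit hu,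
      factorsSatisfy_of_isUnit isUnit_one⟩
  | h₃ a r ha hr ih =>
    obtain ⟨P, Q, rfl, hP, hQ⟩ := ih ha
    by_cases hS : FactorsSatisfy S r
    · exact ⟨r * P, Q, by ring, hS.mul hP, hQ⟩
    · simp only [FactorsSatisfy, not_forall] at hS
      obtain ⟨f, hm, hf, hd, hfS⟩ := hS
      have hr' := FactorsSatisfy.of_irreducible (S := fun f => ¬ S f) hr.irreducible hm hf hd hfS
      exact ⟨P, r * Q, by ring, hP, hr'.mul hQ⟩

end Factors

section Endomorphism

variable {F V : Type*} [Field F] [AddCommGroup V] [Module F V] [FiniteDimensional F V]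
  {φ : Module.End F V}

theorem dvd_of_dvd_charpoly_of_aeval_eq_zero {f A : F[X]} (hf : Irreducible f)
    (hdvd : f ∣ φ.charpoly) (hA : aeval φ A = 0) : f ∣ A := by
  -- After adjoining a root `α` of `f`, the base change of `φ` has eigenvalue `α`, so `A(α) = 0`.
  have : Fact (Irreducible f) := ⟨hf⟩
  let K := AdjoinRoot f
  let α : K := AdjoinRoot.root f
  let ψ : Module.End K (TensorProduct F K V) := Module.End.baseChangeHom F K V φ
  have hroot : ψ.charpoly.IsRoot α := by
    have hψ : ψ.charpoly = φ.charpoly.map (algebraMap F K) := LinearMap.charpoly_baseChange φ K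
    rw [hψ, IsRoot.def, eval_map_algebraMap, AdjoinRoot.aeval_eq, AdjoinRoot.mk_eq_zero]
    exact hdvd
  obtain ⟨v, hv⟩ :=
    ((Module.End.hasEigenvalue_iff_isRoot_charpoly ψ α).2 hroot).exists_hasEigenvector
  have hψA : aeval ψ (A.map (algebraMap F K)) = 0 := by
    rw [aeval_map_algebraMap, aeval_algHom_apply, hA, map_zero]
  have hAα : aeval α A • v = 0 := by
    rw [← eval_map_algebraMap, ← Module.End.aeval_apply_of_hasEigenvector hv, hψA,
      LinearMap.zero_apply]
  rw [AdjoinRoot.aeval_eq] at hAα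
  exact AdjoinRoot.mk_eq_zero.1 ((smul_eq_zero.1 hAα).resolve_right hv.2)

theorem FactorsSatisfy.charpoly {S : F[X] → Prop} {A : F[X]} (h : FactorsSatisfy S A)
    (hA : aeval φ A = 0) : FactorsSatisfy S φ.charpoly :=
  fun f hm hf hd => h f hm hf (dvd_of_dvd_charpoly_of_aeval_eq_zero hf hd hA)

theorem codisjoint_ker_pow_finrank_range_pow_finrank (φ : Module.End F V) :
    Codisjoint (LinearMap.ker (φ ^ Module.finrank F V))
      (LinearMap.range (φ ^ Module.finrank F V)) := by
  obtain ⟨k, hk, hle⟩ := (φ.eventually_codisjoint_ker_pow_range_pow.and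
    (Filter.eventually_ge_atTop (Module.finrank F V))).exists
  refine hk.mono (φ.ker_pow_le_ker_pow_finrank k) ?_
  obtain ⟨m, rfl⟩ := Nat.exists_eq_add_of_le hle
  rw [pow_add]
  exact LinearMap.range_comp_le_range _ _

theorem range_pow_finrank_le_range (φ : Module.End F V) :
    LinearMap.range (φ ^ Module.finrank F V) ≤ LinearMap.range φ := by
  rcases Nat.eq_zero_or_eq_succ_pred (Module.finrank F V) with h | h
  · have := Module.finrank_zero_iff.1 h
    exact (Subsingleton.elim _ _).le
  · rw [h, pow_succ']
    exact LinearMap.range_comp_le_range _ _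

end Endomorphism

/-- The condition that separates the monic irreducible factors `f` of the characteristic polynomial
of `xy` for `x ∈ 𝒳_d` and `y ∈ 𝒴_d(x)`: it holds for those coming from `x` on `V_x` and fails for
those coming from `y` on `V_x⁰`, among which `X - 1` is always counted. -/
def IsDFactor {F : Type*} [Field F] (d : ℕ) (f : F[X]) : Prop :=
  f ≠ X - 1 ∧ d ∣ f.natDegree

theorem factorsSatisfy_X_sub_one {F : Type*} [Field F] {S : F[X] → Prop} (hS : S (X - 1)) :
    FactorsSatisfy S (X - 1) := by
  have hirr : Irreducible (X - 1 : F[X]) := by simpa using irreducible_X_sub_C (1 : F)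
  have hmon : (X - 1 : F[X]).Monic := by simpa using monic_X_sub_C (1 : F)
  exact FactorsSatisfy.of_irreducible hirr hmon hirr dvd_rfl hS

section Parts

variable {F V : Type} [Field F] [AddCommGroup V] [Module F V] [FiniteDimensional F V] {d : ℕ}
  {x x' y y' : (Module.End F V)ˣ}

theorem exists_aeval_mul_X_sub_one_eq_zero_of_mem_dElements (hx : x ∈ dElements F V d) :
    ∃ P : F[X], FactorsSatisfy (IsDFactor d) P ∧
      aeval (x : Module.End F V) (P * (X - 1)) = 0 := by
  set φ : Module.End F V := ↑x
  obtain ⟨P, hP, hndvd⟩ := φ.charpoly.exists_eq_pow_rootMultiplicity_mul_and_not_dvd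
    φ.charpoly_monic.ne_zero 1
  set k := φ.charpoly.rootMultiplicity 1
  refine ⟨P, fun f hm hf hd => ?_, ?_⟩
  · have hne : f ≠ X - 1 := by
      rintro rfl
      exact hndvd (by simpa using hd)
    exact ⟨hne, hx.2 f hm hf (hP ▸ hd.mul_left _) hne⟩
  · ext v
    have hk : ((φ - 1) ^ k) (aeval φ P v) = 0 := by
      simpa [hP] using LinearMap.congr_fun φ.aeval_self_charpoly v
    have hfix : φ (aeval φ P v) = aeval φ P v :=
      hx.1 _ ((φ - 1).ker_pow_le_ker_pow_finrank k hk)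
    rw [mul_comm]
    simpa [sub_eq_zero] using hfix

theorem mem_dElements_of_aeval_eq_zero {P : F[X]} (hP : FactorsSatisfy (IsDFactor d) P)
    (hPx : aeval (x : Module.End F V) (P * (X - 1)) = 0) : x ∈ dElements F V d := by
  set φ : Module.End F V := ↑x
  refine ⟨fun v hv => ?_, ?_⟩
  · have hcop : IsCoprime P ((X - 1 : F[X]) ^ Module.finrank F V) :=
      (hP.isCoprime (factorsSatisfy_X_sub_one fun h => h.1 rfl)).pow_right
    have hPv : aeval φ P ((φ - 1) v) = 0 := by simpa using LinearMap.congr_fun hPx v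
    have hpow : aeval φ ((X - 1 : F[X]) ^ Module.finrank F V) ((φ - 1) v) = 0 := by
      have hv' : ((φ - 1) ^ Module.finrank F V) v = 0 := hv
      rw [map_pow, map_sub, aeval_X, map_one, ← Module.End.mul_apply, ← pow_succ, pow_succ',
        Module.End.mul_apply, hv', map_zero]
    exact sub_eq_zero.1 (Submodule.disjoint_def.1 (disjoint_ker_aeval_of_isCoprime φ hcop)
      _ hPv hpow)
  · have hfactors : FactorsSatisfy (fun f => f ≠ X - 1 → d ∣ f.natDegree) (P * (X - 1)) :=
      (hP.imp fun _ hf _ => hf.2).mul (factorsSatisfy_X_sub_one fun h => absurd rfl h)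
    exact hfactors.charpoly hPx

theorem range_sub_one_le_primaryRange (hx : x ∈ dElements F V d) :
    LinearMap.range ((x : Module.End F V) - 1) ≤ primaryRange x := by
  rintro _ ⟨v, rfl⟩
  obtain ⟨w, _, hw, ⟨u, rfl⟩, rfl⟩ := Submodule.codisjoint_iff_exists_add_eq.1
    (codisjoint_ker_pow_finrank_range_pow_finrank ((x : Module.End F V) - 1)) v
  have hfix : ((x : Module.End F V) - 1) w = 0 := sub_eq_zero.2 (hx.1 w hw)
  rw [map_add, hfix, zero_add, ← Module.End.mul_apply, ← pow_succ', pow_succ]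
  exact ⟨_, rfl⟩

theorem sub_one_mul_sub_one_eq_zero_of_mem_dRegular (hx : x ∈ dElements F V d)
    (hy : y ∈ dRegular F V d x) :
    ((x : Module.End F V) - 1) * ((y : Module.End F V) - 1) = 0 := by
  ext v
  obtain ⟨w, u, hw, hu, rfl⟩ := Submodule.codisjoint_iff_exists_add_eq.1
    (codisjoint_ker_pow_finrank_range_pow_finrank ((x : Module.End F V) - 1)) v
  have hyu : (y : Module.End F V) u = u := hy.1 u hu
  have hxw : (x : Module.End F V) w = w := hx.1 w hw
  have hxyw : (x : Module.End F V) ((y : Module.End F V) w) = (y : Module.End F V) w :=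
    hx.1 _ (hy.2.1 w hw)
  simp [hyu, hxw, hxyw]

theorem commute_of_mem_dRegular (hx : x ∈ dElements F V d) (hy : y ∈ dRegular F V d x) :
    Commute (x : Module.End F V) y := by
  have hyx : ((y : Module.End F V) - 1) * ((x : Module.End F V) - 1) = 0 := by
    ext v
    exact sub_eq_zero.2 (hy.1 _ (range_sub_one_le_primaryRange hx ⟨v, rfl⟩))
  have hcomm : Commute ((x : Module.End F V) - 1) ((y : Module.End F V) - 1) :=
    (sub_one_mul_sub_one_eq_zero_of_mem_dRegular hx hy).trans hyx.symm
  simpa using (hcomm.add_left (Commute.one_left _)).add_right (Commute.one_right _)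

theorem mem_dRegular_of_commute (hxy : Commute (x : Module.End F V) y)
    (h : ((x : Module.End F V) - 1) * ((y : Module.End F V) - 1) = 0)
    (hfactors : FactorsSatisfy (fun f => ¬ IsDFactor d f) (y : Module.End F V).charpoly) :
    y ∈ dRegular F V d x := by
  have hxy' : Commute ((x : Module.End F V) - 1) y := hxy.sub_left (Commute.one_left _)
  refine ⟨fun v hv => ?_, fun v hv => ?_,
    fun f hm hf hd hne hdeg => hfactors f hm hf hd ⟨hne, hdeg⟩⟩
  · obtain ⟨w, rfl⟩ := range_pow_finrank_le_range _ hv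
    have hyx : ((y : Module.End F V) - 1) * ((x : Module.End F V) - 1) = 0 :=
      (hxy'.sub_right (Commute.one_right _)).symm.eq.trans h
    exact sub_eq_zero.1 (LinearMap.congr_fun hyx w)
  · have hv' : (((x : Module.End F V) - 1) ^ Module.finrank F V) v = 0 := hv
    rw [primaryKer, LinearMap.mem_ker, ← Module.End.mul_apply, (hxy'.pow_left _).eq,
      Module.End.mul_apply, hv', map_zero]

theorem factorsSatisfy_charpoly_of_mem_dRegular (hy : y ∈ dRegular F V d x) :
    FactorsSatisfy (fun f => ¬ IsDFactor d f) (y : Module.End F V).charpoly :=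
  fun f hm hf hd h => hy.2.2 f hm hf hd h.1 h.2

theorem exists_aeval_mul_eq_left (hx : x ∈ dElements F V d) (hy : y ∈ dRegular F V d x)
    (hx' : x' ∈ dElements F V d) (hy' : y' ∈ dRegular F V d x') :
    ∃ r : F[X], aeval (x * y : Module.End F V) r = x ∧ aeval (x' * y' : Module.End F V) r = x' := by
  obtain ⟨P, hP, hPx⟩ := exists_aeval_mul_X_sub_one_eq_zero_of_mem_dElements hx
  obtain ⟨P', hP', hPx'⟩ := exists_aeval_mul_X_sub_one_eq_zero_of_mem_dElements hx'
  have hQ := factorsSatisfy_charpoly_of_mem_dRegular hy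
  have hQ' := factorsSatisfy_charpoly_of_mem_dRegular hy'
  obtain ⟨r, hPr, hQr⟩ := exists_dvd_sub_X_and_dvd_sub_one ((hP.mul hP').isCoprime (hQ.mul hQ'))
  refine ⟨r, aeval_mul_eq_left (commute_of_mem_dRegular hx hy)
      (sub_one_mul_sub_one_eq_zero_of_mem_dRegular hx hy) hPx
      (LinearMap.aeval_self_charpoly _) ?_ ?_,
    aeval_mul_eq_left (commute_of_mem_dRegular hx' hy')
      (sub_one_mul_sub_one_eq_zero_of_mem_dRegular hx' hy') hPx'
      (LinearMap.aeval_self_charpoly _) ?_ ?_⟩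
  · exact (mul_dvd_mul_right (dvd_mul_right P P') _).trans hPr
  · exact (dvd_mul_right _ _).trans hQr
  · exact (mul_dvd_mul_right (dvd_mul_left P' P) _).trans hPr
  · exact (dvd_mul_left _ _).trans hQr

theorem conj_left_eq_of_conj_mul_eq (hx : x ∈ dElements F V d) (hy : y ∈ dRegular F V d x)
    (hx' : x' ∈ dElements F V d) (hy' : y' ∈ dRegular F V d x') {g : (Module.End F V)ˣ}
    (hg : g⁻¹ * (x * y) * g = x' * y') : g⁻¹ * x * g = x' := by
  obtain ⟨r, hr, hr'⟩ := exists_aeval_mul_eq_left hx hy hx' hy'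
  have hg' : (↑g⁻¹ * (x * y) * g : Module.End F V) = x' * y' := by
    exact_mod_cast congrArg Units.val hg
  apply Units.ext
  rw [Units.val_mul, Units.val_mul, ← hr', ← hg', aeval_units_conj, hr]

theorem exists_mem_dElements_mul_mem_dRegular_eq (d : ℕ) (g : (Module.End F V)ˣ) :
    ∃ x ∈ dElements F V d, ∃ y ∈ dRegular F V d x, x * y = g := by
  obtain ⟨P, Q, hPQ, hP, hQ⟩ := exists_mul_eq_factorsSatisfy (IsDFactor d)
    (LinearMap.charpoly_monic (g : Module.End F V)).ne_zero
  obtain ⟨ξ, η, hcomm, hmul, hsub, hξ, hη⟩ := exists_commute_mul_eq_of_aeval_mul_eq_zero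
    (hP.isCoprime hQ) (hPQ ▸ LinearMap.aeval_self_charpoly (g : Module.End F V))
  obtain ⟨⟨x, rfl⟩, ⟨y, rfl⟩⟩ := hcomm.isUnit_mul_iff.1 (hmul ▸ g.isUnit)
  have hQX : FactorsSatisfy (fun f => ¬ IsDFactor d f) (Q * (X - 1)) :=
    hQ.mul (factorsSatisfy_X_sub_one fun h => h.1 rfl)
  exact ⟨x, mem_dElements_of_aeval_eq_zero hP hξ,
    y, mem_dRegular_of_commute hcomm hsub (hQX.charpoly hη), Units.ext hmul⟩

end Parts

theorem sections_partition_general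
    {F V : Type} [Field F] [AddCommGroup V] [Module F V] [FiniteDimensional F V] {d : ℕ}
    {x x' y y' : (Module.End F V)ˣ} (hx : x ∈ dElements F V d) (hx' : x' ∈ dElements F V d)
    (hy : y ∈ dRegular F V d x) (hy' : y' ∈ dRegular F V d x') :
    ((∃ g : (Module.End F V)ˣ, g⁻¹ * (x * y) * g = x' * y') ↔
      ∃ g : (Module.End F V)ˣ, g⁻¹ * x * g = x' ∧ g⁻¹ * y * g = y') ∧
    ∀ g : (Module.End F V)ˣ, ∃ x₀ ∈ dElements F V d, ∃ y₀ ∈ dRegular F V d x₀,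
      ∃ h : (Module.End F V)ˣ, h⁻¹ * (x₀ * y₀) * h = g := by
  have conj_mul (g : (Module.End F V)ˣ) :
      g⁻¹ * (x * y) * g = (g⁻¹ * x * g) * (g⁻¹ * y * g) := by group
  refine ⟨⟨fun ⟨g, hg⟩ => ⟨g, ?_⟩, fun ⟨g, hgx, hgy⟩ => ⟨g, ?_⟩⟩, fun g => ?_⟩
  · have hgx : g⁻¹ * x * g = x' := conj_left_eq_of_conj_mul_eq hx hy hx' hy' hg
    exact ⟨hgx, mul_left_cancel (by rw [← hg, conj_mul, hgx])⟩
  · rw [conj_mul, hgx, hgy]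
  · obtain ⟨x₀, hx₀, y₀, hy₀, h⟩ := exists_mem_dElements_mul_mem_dRegular_eq d g
    exact ⟨x₀, hx₀, y₀, hy₀, 1, by simpa using h⟩

/-- For `d ≥ 1`, `x, x′ ∈ 𝒳_d`, `y ∈ 𝒴_d(x)`, `y′ ∈ 𝒴_d(x′)`:
`xy` and `x′y′` are conjugate in `G = GL(V)` iff some `g ∈ G` simultaneously
conjugates `x` to `x′` and `y` to `y′`. Consequently `G` is the disjoint union,
over representatives `x` of the `G`-classes in `𝒳_d` and representatives `y` of
the `C_G(x)`-classes in `𝒴_d(x)`, of the `G`-conjugacy classes of the `xy`; in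
particular every `g ∈ G` is conjugate to some such product `x₀ y₀`. -/
theorem sections_partition
    (F V : Type) [Field F] [Fintype F] [AddCommGroup V] [Module F V]
    [FiniteDimensional F V] (hn : 1 ≤ Module.finrank F V)
    (d : ℕ) (hd : 1 ≤ d)
    (x x' : (Module.End F V)ˣ)
    (hx : x ∈ dElements F V d) (hx' : x' ∈ dElements F V d)
    (y y' : (Module.End F V)ˣ)
    (hy : y ∈ dRegular F V d x) (hy' : y' ∈ dRegular F V d x') :
    ((∃ g : (Module.End F V)ˣ, g⁻¹ * (x * y) * g = x' * y') ↔
      ∃ g : (Module.End F V)ˣ, g⁻¹ * x * g = x' ∧ g⁻¹ * y * g = y') ∧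
    ∀ g : (Module.End F V)ˣ, ∃ x₀ ∈ dElements F V d, ∃ y₀ ∈ dRegular F V d x₀,
      ∃ h : (Module.End F V)ˣ, h⁻¹ * (x₀ * y₀) * h = g :=
  sections_partition_general hx hx' hy hy'
end
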